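/- arXiv:2602.23311 — 4 statements merged into one kernel-verified Lean document; each statement's English description precedes it below -/
import Mathlib

section
/- For every unconstrained coefficient vector β ∈ ℝ^D, the transformation H satisfies H(k_1) = k_1. -/
open MeasureTheory Finset

noncomputable section

/-- The cardinal cubic B-spline. -/
def cubicN (t : ℝ) : ℝ :=
  if 0 ≤ t ∧ t < 1 then t ^ 3 / 6
  else if 1 ≤ t ∧ t < 2 then (-3 * t ^ 3 + 12 * t ^ 2 - 12 * t + 4) / 6
  else if 2 ≤ t ∧ t < 3 then (3 * t ^ 3 - 24 * t ^ 2 + 60 * t - 44) / 6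
  else if 3 ≤ t ∧ t ≤ 4 then (4 - t) ^ 3 / 6
  else 0

/-- Equidistant knots `k_j = k0 + j·k`. -/
def knot (k0 k : ℝ) (j : ℤ) : ℝ := k0 + (j : ℝ) * k

/-- Cubic B-spline basis functions `B_j(x) = N((x − k_{j−3})/k)` for `j = 1, …, J`. -/
def Bspl (k0 k : ℝ) (j : ℕ) (x : ℝ) : ℝ := cubicN ((x - knot k0 k ((j : ℤ) - 3)) / k)

/-- The coefficients `γ_1, …, γ_J` (with `J = D + 7`, `m = D + 5`), defined from the
unconstrained vector `β ∈ ℝ^D`. -/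
def gam (D : ℕ) (k0 k : ℝ) (β : Fin D → ℝ) (j : ℕ) : ℝ :=
  if j = 1 then k0
  else if j = 2 ∨ j = 3 ∨ j = 4 ∨ j = D + 5 ∨ j = D + 6 ∨ j = D + 7 then Real.log k
  else if h : 5 ≤ j ∧ j ≤ D + 4 then
    β ⟨j - 5, by omega⟩ - Real.log ((∑ d, Real.exp (β d)) / ((D : ℝ) * k))
  else 0

/-- The transformation `H`: a cubic B-spline with coefficients
`γ_1 + ∑_{ℓ=2}^j exp(γ_ℓ)` on `[k_1, k_m]` (with `m = D + 5`), and the identity outside. -/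
def Hfun (D : ℕ) (k0 k : ℝ) (β : Fin D → ℝ) (x : ℝ) : ℝ :=
  if knot k0 k 1 ≤ x ∧ x ≤ knot k0 k ((D : ℤ) + 5) then
    ∑ j ∈ Finset.Icc 1 (D + 7),
      Bspl k0 k j x * (gam D k0 k β 1 + ∑ l ∈ Finset.Icc 2 j, Real.exp (gam D k0 k β l))
  else x

/-!
At a knot `k_i` with `1 ≤ i ≤ m` only three basis functions survive, with values `1/6, 4/6, 1/6`,
so a spline with coefficients `c` takes there the value `(c_i + 4 c_{i+1} + c_{i+2}) / 6`. The first
coefficients of `H` increase in steps of `exp (log k) = k` from `k_0`, so those entering `H(k_1)`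
are `k_0, k_1, k_2`, and their weighted mean is `k_1`.
-/

lemma cubicN_eq_zero_of_nonpos {t : ℝ} (ht : t ≤ 0) : cubicN t = 0 := by
  unfold cubicN
  split_ifs with h
  · rw [le_antisymm ht h.1]
    norm_num
  all_goals first | rfl | linarith

lemma cubicN_eq_zero_of_four_le {t : ℝ} (ht : 4 ≤ t) : cubicN t = 0 := by
  unfold cubicN
  split_ifs with _ _ _ h
  iterate 3 linarith
  · rw [le_antisymm h.2 ht]
    norm_num
  · rfl

lemma cubicN_one : cubicN 1 = 1 / 6 := by norm_num [cubicN]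

lemma cubicN_two : cubicN 2 = 4 / 6 := by norm_num [cubicN]

lemma cubicN_three : cubicN 3 = 1 / 6 := by norm_num [cubicN]

section Spline

variable {k : ℝ} (k0 : ℝ)

lemma knot_monotone (hk : 0 ≤ k) : Monotone (knot k0 k) := fun i j hij ↦ by
  unfold knot
  gcongr

lemma Bspl_knot (hk : k ≠ 0) (j : ℕ) (i : ℤ) :
    Bspl k0 k j (knot k0 k i) = cubicN (i + 3 - j) := by
  unfold Bspl knot
  congr 1
  push_cast
  field_simp
  ring

lemma Bspl_knot_eq_zero (hk : k ≠ 0) {i j : ℕ} (hj : j ∉ Ico i (i + 3)) :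
    Bspl k0 k j (knot k0 k i) = 0 := by
  rw [Bspl_knot k0 hk, Int.cast_natCast]
  have hj_outside : j + 1 ≤ i ∨ i + 3 ≤ j := by
    rw [mem_Ico] at hj
    omega
  rcases hj_outside with hleft | hright
  · have : (j : ℝ) + 1 ≤ i := mod_cast hleft
    exact cubicN_eq_zero_of_four_le (by linarith)
  · have : (i : ℝ) + 3 ≤ j := mod_cast hright
    exact cubicN_eq_zero_of_nonpos (by linarith)

lemma sum_Bspl_knot_mul (hk : k ≠ 0) {i n : ℕ} (hi : 1 ≤ i) (hin : i + 2 ≤ n) (c : ℕ → ℝ) :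
    ∑ j ∈ Icc 1 n, Bspl k0 k j (knot k0 k i) * c j = (c i + 4 * c (i + 1) + c (i + 2)) / 6 := by
  have hsub : Ico i (i + 3) ⊆ Icc 1 n := fun j hj ↦ by
    simp only [mem_Ico, mem_Icc] at hj ⊢
    omega
  have hzero : ∀ j ∈ Icc 1 n, j ∉ Ico i (i + 3) → Bspl k0 k j (knot k0 k i) * c j = 0 :=
    fun j _ hj ↦ by rw [Bspl_knot_eq_zero k0 hk hj, zero_mul]
  have hvalue (r : ℕ) : Bspl k0 k (i + r) (knot k0 k i) = cubicN (3 - r) := by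
    rw [Bspl_knot k0 hk]
    push_cast
    ring_nf
  calc ∑ j ∈ Icc 1 n, Bspl k0 k j (knot k0 k i) * c j
      = ∑ j ∈ Ico i (i + 3), Bspl k0 k j (knot k0 k i) * c j := (sum_subset hsub hzero).symm
    _ = ∑ r ∈ range 3, cubicN (3 - r) * c (i + r) := by
        simp only [sum_Ico_eq_sum_range, add_tsub_cancel_left, hvalue]
    _ = cubicN 3 * c i + cubicN 2 * c (i + 1) + cubicN 1 * c (i + 2) := by
        norm_num [sum_range_succ]
    _ = (c i + 4 * c (i + 1) + c (i + 2)) / 6 := by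
        rw [cubicN_one, cubicN_two, cubicN_three]
        ring

end Spline

section Transformation

/-- The B-spline coefficients `γ_1 + ∑_{ℓ=2}^j exp(γ_ℓ)` of `H` on `[k_1, k_m]`, for
`1 ≤ j ≤ D + 7`. -/
def splineCoeff (D : ℕ) (k0 k : ℝ) (β : Fin D → ℝ) (j : ℕ) : ℝ :=
  gam D k0 k β 1 + ∑ l ∈ Icc 2 j, Real.exp (gam D k0 k β l)

variable {D : ℕ} {k : ℝ} (k0 : ℝ) (β : Fin D → ℝ)

lemma Hfun_knot (hk : 0 < k) {i : ℕ} (hi : 1 ≤ i) (hiD : i ≤ D + 5) :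
    Hfun D k0 k β (knot k0 k i) =
      (splineCoeff D k0 k β i + 4 * splineCoeff D k0 k β (i + 1) +
        splineCoeff D k0 k β (i + 2)) / 6 := by
  have hmem : knot k0 k 1 ≤ knot k0 k i ∧ knot k0 k i ≤ knot k0 k ((D : ℤ) + 5) :=
    ⟨knot_monotone k0 hk.le (by omega), knot_monotone k0 hk.le (by omega)⟩
  rw [Hfun, if_pos hmem]
  exact sum_Bspl_knot_mul k0 hk.ne' hi (by omega) (splineCoeff D k0 k β)

lemma gam_one : gam D k0 k β 1 = k0 := if_pos rfl

lemma gam_eq_log {j : ℕ} (hj : j ∈ Icc 2 4) : gam D k0 k β j = Real.log k := by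
  rw [mem_Icc] at hj
  rw [gam, if_neg (by omega), if_pos (by omega)]

lemma splineCoeff_succ_eq_knot (hk : 0 < k) {j : ℕ} (hj : j ≤ 3) :
    splineCoeff D k0 k β (j + 1) = knot k0 k j := by
  have hexp : ∀ l ∈ Icc 2 (j + 1), Real.exp (gam D k0 k β l) = k := fun l hl ↦ by
    rw [gam_eq_log k0 β (Icc_subset_Icc_right (by omega) hl), Real.exp_log hk]
  rw [splineCoeff, gam_one, sum_congr rfl hexp, sum_const, Nat.card_Icc, nsmul_eq_mul, knot,
    Int.cast_natCast, show j + 1 + 1 - 2 = j by omega]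

end Transformation

/-- For every unconstrained coefficient vector `β ∈ ℝ^D`, the
transformation `H` satisfies `H(k_1) = k_1`. -/
theorem H_passes_through_k1 (D : ℕ) (hD : 1 ≤ D) (k0 k : ℝ) (hk : 0 < k)
    (β : Fin D → ℝ) :
    Hfun D k0 k β (knot k0 k 1) = knot k0 k 1 := by
  calc Hfun D k0 k β (knot k0 k 1)
      = (splineCoeff D k0 k β 1 + 4 * splineCoeff D k0 k β 2 + splineCoeff D k0 k β 3) / 6 :=
        mod_cast Hfun_knot k0 β hk (i := 1) le_rfl (by omega)
    _ = (knot k0 k 0 + 4 * knot k0 k 1 + knot k0 k 2) / 6 := by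
        rw [splineCoeff_succ_eq_knot k0 β hk (j := 0) (by norm_num),
          splineCoeff_succ_eq_knot k0 β hk (j := 1) (by norm_num),
          splineCoeff_succ_eq_knot k0 β hk (j := 2) (by norm_num)]
        norm_cast
    _ = knot k0 k 1 := by
        unfold knot
        push_cast
        ring

end
end

section
/- (Reduction to base model.) Suppose all entries of β are equal, i.e. β = β₀·(1, …, 1) for some β₀ ∈ ℝ. Let F : ℝ → ℝ be a continuous, strictly increasing function with range (0,1) (a continuous cumulative distribution function), and let G : ℝ → ℝ be the function satisfying Φ(G(t)) = F(t) for all t ∈ ℝ. If y is a real-valued random variable such that the distribution of (H ∘ G)(y) is the standard normal distribution N(0,1), then ℙ(y ≤ t) = F(t) for all t ∈ ℝ. -/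
open MeasureTheory Finset

noncomputable section

/-- The standard normal CDF `Φ`. -/
def stdNormalCDF (t : ℝ) : ℝ := ((ProbabilityTheory.gaussianReal 0 1) (Set.Iic t)).toReal

/-!
A cubic B-spline on equidistant knots reproduces an affine function as soon as its coefficients are
the values of that function at the Greville abscissae, that of `B_j` being the middle interior knot
`k_{j-1}`. For constant `β` every increment `exp γ_ℓ` equals `k`, so the coefficients of `H` are
precisely these knots and `H` is the identity. Hence `G ∘ y` is standard normal; as `Φ` is monotone
and `Φ ∘ G = F` is strictly increasing, `G` is strictly increasing, and `{y ≤ t} = {G ∘ y ≤ G t}`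
has probability `Φ (G t) = F t`.
-/

section CardinalSpline

theorem cubicN_of_mem_Icc_zero_one {t : ℝ} (ht : t ∈ Set.Icc 0 1) : cubicN t = t ^ 3 / 6 := by
  obtain ⟨h0, h1⟩ := ht
  rcases h1.lt_or_eq with h1 | rfl
  · rw [cubicN, if_pos ⟨h0, h1⟩]
  · norm_num [cubicN]

theorem cubicN_of_mem_Icc_one_two {t : ℝ} (ht : t ∈ Set.Icc 1 2) :
    cubicN t = (-3 * t ^ 3 + 12 * t ^ 2 - 12 * t + 4) / 6 := by
  obtain ⟨h1, h2⟩ := ht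
  rcases h2.lt_or_eq with h2 | rfl
  · rw [cubicN, if_neg (by grind), if_pos ⟨h1, h2⟩]
  · norm_num [cubicN]

theorem cubicN_of_mem_Icc_two_three {t : ℝ} (ht : t ∈ Set.Icc 2 3) :
    cubicN t = (3 * t ^ 3 - 24 * t ^ 2 + 60 * t - 44) / 6 := by
  obtain ⟨h2, h3⟩ := ht
  rcases h3.lt_or_eq with h3 | rfl
  · rw [cubicN, if_neg (by grind), if_neg (by grind), if_pos ⟨h2, h3⟩]
  · norm_num [cubicN]

theorem cubicN_of_mem_Icc_three_four {t : ℝ} (ht : t ∈ Set.Icc 3 4) :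
    cubicN t = (4 - t) ^ 3 / 6 := by
  obtain ⟨h3, h4⟩ := ht
  rw [cubicN, if_neg (by grind), if_neg (by grind), if_neg (by grind), if_pos ⟨h3, h4⟩]

theorem cubicN_eq_zero_of_notMem_Ioo {t : ℝ} (ht : t ∉ Set.Ioo 0 4) : cubicN t = 0 := by
  rcases le_or_gt t 0 with h0 | h0
  · rcases h0.lt_or_eq with h0 | rfl
    · rw [cubicN, if_neg (by grind), if_neg (by grind), if_neg (by grind), if_neg (by grind)]
    · norm_num [cubicN]
  · have h4 : 4 ≤ t := not_lt.1 fun h4 => ht ⟨h0, h4⟩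
    rcases h4.lt_or_eq with h4 | rfl
    · rw [cubicN, if_neg (by grind), if_neg (by grind), if_neg (by grind), if_neg (by grind)]
    · norm_num [cubicN]

theorem sum_cubicN_mul_affine_of_mem_Icc {s : ℝ} (hs : s ∈ Set.Icc 0 1) (a b : ℝ) :
    ∑ r ∈ range 4, cubicN (s + 3 - r) * (a + r * b) = a + (s + 1) * b := by
  obtain ⟨h0, h1⟩ := hs
  have piece₀ := cubicN_of_mem_Icc_three_four (t := s + 3) ⟨by linarith, by linarith⟩
  have piece₁ := cubicN_of_mem_Icc_two_three (t := s + 2) ⟨by linarith, by linarith⟩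
  have piece₂ := cubicN_of_mem_Icc_one_two (t := s + 1) ⟨by linarith, by linarith⟩
  have piece₃ := cubicN_of_mem_Icc_zero_one (t := s) ⟨h0, h1⟩
  calc ∑ r ∈ range 4, cubicN (s + 3 - r) * (a + r * b)
      = cubicN (s + 3) * a + cubicN (s + 2) * (a + b) + cubicN (s + 1) * (a + 2 * b)
          + cubicN s * (a + 3 * b) := by
        simp only [sum_range_succ, sum_range_zero]
        ring_nf
    _ = a + (s + 1) * b := by
        rw [piece₀, piece₁, piece₂, piece₃]
        ring

theorem sum_cubicN_mul_eq_sum_Ico {u : ℝ} {i : ℕ} (hu : u ∈ Set.Icc (i : ℝ) (i + 1))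
    {S : Finset ℕ} (hS : Ico i (i + 4) ⊆ S) (c : ℕ → ℝ) :
    ∑ j ∈ S, cubicN (u + 3 - j) * c j = ∑ j ∈ Ico i (i + 4), cubicN (u + 3 - j) * c j := by
  refine (sum_subset hS fun j _ hj => ?_).symm
  have hu' : u + 3 - j ∉ Set.Ioo 0 4 := by
    rintro ⟨hlt, hgt⟩
    have hij : (i : ℝ) < j + 1 := by linarith [hu.1]
    have hji : (j : ℝ) < i + 4 := by linarith [hu.2]
    exact hj (mem_Ico.2 ⟨Nat.lt_succ_iff.1 (by exact_mod_cast hij), by exact_mod_cast hji⟩)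
  rw [cubicN_eq_zero_of_notMem_Ioo hu', zero_mul]

theorem sum_cubicN_mul_affine {u : ℝ} {i : ℕ} (hu : u ∈ Set.Icc (i : ℝ) (i + 1))
    {S : Finset ℕ} (hS : Ico i (i + 4) ⊆ S) (a b : ℝ) :
    ∑ j ∈ S, cubicN (u + 3 - j) * (a + j * b) = a + (u + 1) * b := by
  have hs : u - i ∈ Set.Icc (0 : ℝ) 1 := ⟨by linarith [hu.1], by linarith [hu.2]⟩
  calc ∑ j ∈ S, cubicN (u + 3 - j) * (a + j * b)
      = ∑ j ∈ Ico i (i + 4), cubicN (u + 3 - j) * (a + j * b) :=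
        sum_cubicN_mul_eq_sum_Ico hu hS _
    _ = ∑ r ∈ range 4, cubicN (u - i + 3 - r) * ((a + i * b) + r * b) := by
        rw [sum_Ico_eq_sum_range, Nat.add_sub_cancel_left]
        refine sum_congr rfl fun r _ => ?_
        push_cast
        ring_nf
    _ = a + (u + 1) * b := by
        rw [sum_cubicN_mul_affine_of_mem_Icc hs]
        ring

end CardinalSpline

theorem exists_nat_mem_Icc_add_one {m n : ℕ} (hmn : m < n) {u : ℝ}
    (hu : u ∈ Set.Icc (m : ℝ) n) :
    ∃ i : ℕ, m ≤ i ∧ i < n ∧ u ∈ Set.Icc (i : ℝ) (i + 1) := by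
  obtain ⟨hmu, hun⟩ := hu
  have hu0 : 0 ≤ u := m.cast_nonneg.trans hmu
  rcases hun.lt_or_eq with hun | rfl
  · exact ⟨⌊u⌋₊, Nat.le_floor hmu, (Nat.floor_lt hu0).2 hun, Nat.floor_le hu0,
      (Nat.lt_floor_add_one u).le⟩
  · obtain ⟨i, rfl⟩ := Nat.exists_eq_add_one_of_ne_zero (Nat.ne_zero_of_lt hmn)
    exact ⟨i, Nat.le_of_lt_succ hmn, i.lt_succ_self, by simp⟩

section Transformation

variable {k0 k : ℝ}

theorem Bspl_eq_cubicN (hk : k ≠ 0) (j : ℕ) (x : ℝ) :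
    Bspl k0 k j x = cubicN ((x - k0) / k + 3 - j) := by
  rw [Bspl, knot]
  congr 1
  push_cast
  field_simp
  ring

theorem sum_Bspl_mul_knot (hk : 0 < k) {n : ℕ} (hn : 4 ≤ n) {x : ℝ}
    (hx : x ∈ Set.Icc (knot k0 k 1) (knot k0 k (n - 2))) :
    ∑ j ∈ Icc 1 n, Bspl k0 k j x * knot k0 k (j - 1) = x := by
  have hu : (x - k0) / k ∈ Set.Icc ((1 : ℕ) : ℝ) (n - 2 : ℕ) := by
    obtain ⟨hx1, hxn⟩ := hx
    simp only [knot] at hx1 hxn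
    rw [Set.mem_Icc, le_div_iff₀ hk, div_le_iff₀ hk, Nat.cast_sub (by lia)]
    push_cast at hx1 hxn ⊢
    constructor <;> linarith
  obtain ⟨i, hi1, hin, hui⟩ := exists_nat_mem_Icc_add_one (by lia) hu
  have hS : Ico i (i + 4) ⊆ Icc 1 n := by
    intro j
    simp only [mem_Ico, mem_Icc]
    lia
  calc ∑ j ∈ Icc 1 n, Bspl k0 k j x * knot k0 k (j - 1)
      = ∑ j ∈ Icc 1 n, cubicN ((x - k0) / k + 3 - j) * ((k0 - k) + j * k) := by
        refine sum_congr rfl fun j _ => ?_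
        rw [Bspl_eq_cubicN hk.ne', knot]
        push_cast
        ring
    _ = (k0 - k) + ((x - k0) / k + 1) * k := sum_cubicN_mul_affine hui hS _ _
    _ = x := by
        field_simp
        ring

theorem exp_gam_const (hk : 0 < k) (β0 : ℝ) {D l : ℕ} (hl : l ∈ Icc 2 (D + 7)) :
    Real.exp (gam D k0 k (fun _ => β0) l) = k := by
  obtain ⟨hl2, hlD⟩ := mem_Icc.1 hl
  rw [gam, if_neg (by lia)]
  split_ifs with hend hmid
  · exact Real.exp_log hk
  · have hD : (D : ℝ) ≠ 0 := Nat.cast_ne_zero.2 (by lia)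
    have hmean : (∑ _d : Fin D, Real.exp β0) / (D * k) = Real.exp β0 / k := by
      rw [sum_const, card_univ, Fintype.card_fin, nsmul_eq_mul, mul_div_mul_left _ _ hD]
    rw [hmean, Real.exp_sub, Real.exp_log (by positivity), div_div_cancel₀ (Real.exp_ne_zero _)]
  · lia

theorem gam_one_add_sum_exp_gam_const (hk : 0 < k) (β0 : ℝ) {D j : ℕ} (hj : j ∈ Icc 1 (D + 7)) :
    gam D k0 k (fun _ => β0) 1 + ∑ l ∈ Icc 2 j, Real.exp (gam D k0 k (fun _ => β0) l)
      = knot k0 k (j - 1) := by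
  obtain ⟨hj1, hjD⟩ := mem_Icc.1 hj
  have hsum : ∑ l ∈ Icc 2 j, Real.exp (gam D k0 k (fun _ => β0) l) = (j - 1 : ℕ) * k := by
    rw [sum_congr rfl fun l hl => exp_gam_const hk β0 (Icc_subset_Icc_right hjD hl), sum_const,
      Nat.card_Icc, nsmul_eq_mul, Nat.add_sub_add_right j 1 1]
  rw [hsum, gam, if_pos rfl, knot, Nat.cast_sub hj1]
  push_cast
  rfl

theorem Hfun_const (hk : 0 < k) (D : ℕ) (β0 x : ℝ) : Hfun D k0 k (fun _ => β0) x = x := by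
  rw [Hfun]
  split_ifs with hx
  · rw [sum_congr rfl fun j hj => by rw [gam_one_add_sum_exp_gam_const hk β0 hj]]
    refine sum_Bspl_mul_knot hk (by lia) ⟨hx.1, hx.2.trans_eq ?_⟩
    congr 1
    lia
  · rfl

end Transformation

theorem monotone_stdNormalCDF : Monotone stdNormalCDF := fun _ _ hab =>
  measureReal_mono (Set.Iic_subset_Iic.2 hab)

theorem measureReal_le_eq_map_Iic {Ω α β : Type*} [MeasurableSpace Ω] {P : Measure Ω}
    [LinearOrder α] [Preorder β] [TopologicalSpace β] [ClosedIicTopology β] [MeasurableSpace β]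
    [OpensMeasurableSpace β] {g : α → β} (hg : StrictMono g) {y : Ω → α}
    (hgy : AEMeasurable (fun ω => g (y ω)) P) (t : α) :
    P.real {ω | y ω ≤ t} = (P.map fun ω => g (y ω)).real (Set.Iic (g t)) := by
  rw [map_measureReal_apply_of_aemeasurable hgy measurableSet_Iic]
  simp only [Set.preimage, Set.mem_Iic, hg.le_iff_le]

/-- Reduction to base model: Suppose all entries of `β` are equal,
`β = β₀·(1, …, 1)`. Let `F : ℝ → ℝ` be a continuous, strictly increasing function with
range `(0,1)` (a continuous CDF), and let `G : ℝ → ℝ` satisfy `Φ(G(t)) = F(t)` for all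
`t`. If `y` is a real-valued random variable such that the distribution of `(H ∘ G)(y)`
is `N(0,1)`, then `ℙ(y ≤ t) = F(t)` for all `t ∈ ℝ`. -/
theorem reduction_to_base_model (D : ℕ) (hD : 1 ≤ D) (k0 k : ℝ) (hk : 0 < k)
    (β0 : ℝ)
    (F G : ℝ → ℝ) (hFcont : Continuous F) (hFmono : StrictMono F)
    (hFrange : Set.range F = Set.Ioo 0 1)
    (hG : ∀ t, stdNormalCDF (G t) = F t)
    {Ω : Type*} [MeasurableSpace Ω] (P : MeasureTheory.Measure Ω)
    [MeasureTheory.IsProbabilityMeasure P]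
    (y : Ω → ℝ) (hy : Measurable y)
    (hdist : MeasureTheory.Measure.map (fun ω => Hfun D k0 k (fun _ => β0) (G (y ω))) P
      = ProbabilityTheory.gaussianReal 0 1) :
    ∀ t : ℝ, (P {ω | y ω ≤ t}).toReal = F t := by
  intro t
  simp only [Hfun_const hk] at hdist
  have hGy : AEMeasurable (fun ω => G (y ω)) P :=
    aemeasurable_of_map_neZero (by rw [hdist]; infer_instance)
  have hGmono : StrictMono G := fun s t hst =>
    monotone_stdNormalCDF.reflect_lt (by simpa only [hG] using hFmono hst)
  calc (P {ω | y ω ≤ t}).toReal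
      = (P.map fun ω => G (y ω)).real (Set.Iic (G t)) := measureReal_le_eq_map_Iic hGmono hGy t
    _ = stdNormalCDF (G t) := by rw [hdist]; rfl
    _ = F t := hG t

end
end

section
/- (Density factorization of the triangular transport model.) Suppose each f_i : ℝ^{i−1} → ℝ is Borel measurable and each d_i > 0. Let μ be the Borel measure on ℝ^L whose density with respect to L-dimensional Lebesgue measure is p(y) = ∏_{i=1}^L φ((y_i − f_i(y_1, …, y_{i−1}))/d_i)/d_i, where φ is the standard normal probability density function. Then the pushforward of μ under the lower-triangular transport map T equals the L-dimensional standard Gaussian measure (the product of L copies of N(0,1)); equivalently, if Z is distributed as the L-dimensional standard Gaussian, then T⁻¹(Z) has Lebesgue density p. -/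
open MeasureTheory

noncomputable section

/-- The lower-triangular transport map `T : ℝ^L → ℝ^L` with components
`T(z)_i = (z_i − f_i(z_1, …, z_{i−1}))/d_i`. -/
def Tmap (L : ℕ) (f : (i : Fin L) → (Fin i → ℝ) → ℝ) (d : Fin L → ℝ) :
    (Fin L → ℝ) → (Fin L → ℝ) :=
  fun z i => (z i - f i (fun j => z ⟨j.1, lt_trans j.2 i.2⟩)) / d i

/-- The standard normal probability density function `φ`. -/
def stdNormalPDF (x : ℝ) : ℝ := (Real.sqrt (2 * Real.pi))⁻¹ * Real.exp (-x ^ 2 / 2)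

/-!
The transport map is a triangular shear followed by a diagonal scaling. A triangular map whose
fibres preserve measure preserves the product measure: split off the last coordinate and induct.
Hence the shear preserves Lebesgue measure and `T` multiplies it by `|∏ dᵢ|`. The density `p` is the
product density `∏ φ(xᵢ)` evaluated at `T y` and divided by `∏ dᵢ`, so the push-forward cancels the
factor and leaves Lebesgue measure with density `∏ φ(xᵢ)`, which is the product Gaussian.
-/

open scoped ENNReal

section Snoc

variable {n : ℕ} (E : Fin (n + 1) → Type*) [∀ i, MeasurableSpace (E i)]

/-- Appending a last coordinate, as a measurable equivalence. Its inverse splits off the last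
coordinate. It is the measurable version of `Fin.snocEquiv`, with the initial segment as the first
factor so that a triangular map becomes a skew product. -/
def snocMeasurableEquiv :
    ((i : Fin n) → E i.castSucc) × E (Fin.last n) ≃ᵐ ((i : Fin (n + 1)) → E i) where
  toEquiv := (Equiv.prodComm _ _).trans (Fin.snocEquiv E)
  measurable_toFun := by
    refine measurable_pi_lambda _ (Fin.lastCases ?_ fun i => ?_)
    · simpa [Fin.snocEquiv] using measurable_snd
    · simpa [Fin.snocEquiv] using! (measurable_pi_apply i).comp measurable_fst
  measurable_invFun :=
    (measurable_pi_lambda _ fun i => measurable_pi_apply i.castSucc).prodMk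
      (measurable_pi_apply (Fin.last n))

variable {E} in
theorem measurePreserving_snocMeasurableEquiv (μ : (i : Fin (n + 1)) → Measure (E i))
    [∀ i, SigmaFinite (μ i)] :
    MeasurePreserving (snocMeasurableEquiv E)
      ((Measure.pi fun i : Fin n => μ i.castSucc).prod (μ (Fin.last n))) (Measure.pi μ) := by
  refine ⟨(snocMeasurableEquiv E).measurable, (Measure.pi_eq fun s _ => ?_).symm⟩
  have hbox : snocMeasurableEquiv E ⁻¹' Set.univ.pi s =
      (Set.univ.pi fun i : Fin n => s i.castSucc) ×ˢ s (Fin.last n) := by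
    ext p
    simp [snocMeasurableEquiv, Fin.snocEquiv, Fin.forall_fin_succ']
  rw [MeasurableEquiv.map_apply, hbox, Measure.prod_prod, Measure.pi_pi, Fin.prod_univ_castSucc]

end Snoc

section ProductDensity

theorem lintegral_fin_prod_eq_prod {n : ℕ} {E : Fin n → Type*} {mE : ∀ i, MeasurableSpace (E i)}
    {μ : (i : Fin n) → Measure (E i)} [∀ i, SigmaFinite (μ i)] {g : (i : Fin n) → E i → ℝ≥0∞}
    (hg : ∀ i, Measurable (g i)) :
    ∫⁻ x, ∏ i, g i (x i) ∂Measure.pi μ = ∏ i, ∫⁻ x, g i x ∂μ i := by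
  induction n with
  | zero => simp
  | succ n ih =>
    have hinit : Measurable fun x : (i : Fin n) → E i.castSucc => ∏ i, g i.castSucc (x i) := by
      fun_prop
    have hlast := hg (Fin.last n)
    simp_rw [Fin.prod_univ_castSucc]
    calc
      ∫⁻ x, (∏ i : Fin n, g i.castSucc (x i.castSucc)) * g (Fin.last n) (x (Fin.last n))
            ∂Measure.pi μ
        = ∫⁻ p, (∏ i : Fin n, g i.castSucc (p.1 i)) * g (Fin.last n) p.2
            ∂(Measure.pi fun i : Fin n => μ i.castSucc).prod (μ (Fin.last n)) :=
          (measurePreserving_snocMeasurableEquiv μ).symm.lintegral_comp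
            (f := fun p => (∏ i : Fin n, g i.castSucc (p.1 i)) * g (Fin.last n) p.2) (by fun_prop)
      _ = (∏ i : Fin n, ∫⁻ x, g i.castSucc x ∂μ i.castSucc) *
            ∫⁻ x, g (Fin.last n) x ∂μ (Fin.last n) := by
          rw [lintegral_prod_mul hinit.aemeasurable hlast.aemeasurable, ih fun i => hg i.castSucc]

variable {ι : Type*} [Fintype ι] {E : ι → Type*} {mE : ∀ i, MeasurableSpace (E i)}
  {μ : (i : ι) → Measure (E i)} [∀ i, SigmaFinite (μ i)] {g : (i : ι) → E i → ℝ≥0∞}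

theorem lintegral_fintype_prod_eq_prod (hg : ∀ i, Measurable (g i)) :
    ∫⁻ x, ∏ i, g i (x i) ∂Measure.pi μ = ∏ i, ∫⁻ x, g i x ∂μ i := by
  let e := (Fintype.equivFin ι).symm
  rw [← (measurePreserving_piCongrLeft μ e).lintegral_comp (by fun_prop)]
  simp_rw [← e.prod_comp, MeasurableEquiv.coe_piCongrLeft, Equiv.piCongrLeft_apply_apply]
  exact lintegral_fin_prod_eq_prod fun i => hg (e i)

theorem pi_withDensity (hg : ∀ i, Measurable (g i))
    [∀ i, SigmaFinite ((μ i).withDensity (g i))] :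
    Measure.pi (fun i => (μ i).withDensity (g i)) =
      (Measure.pi μ).withDensity fun x => ∏ i, g i (x i) := by
  refine Measure.pi_eq fun s hs => ?_
  rw [withDensity_apply _ (MeasurableSet.univ_pi hs), Measure.restrict_pi_pi,
    lintegral_fintype_prod_eq_prod hg]
  exact Finset.prod_congr rfl fun i _ => (withDensity_apply _ (hs i)).symm

end ProductDensity

theorem map_withDensity_comp {α β : Type*} [MeasurableSpace α] [MeasurableSpace β] {μ : Measure α}
    {T : α → β} (hT : Measurable T) {g : β → ℝ≥0∞} (hg : Measurable g) :
    (μ.withDensity fun x => g (T x)).map T = (μ.map T).withDensity g := by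
  ext s hs
  rw [Measure.map_apply hT hs, withDensity_apply _ (hT hs), withDensity_apply _ hs,
    setLIntegral_map hs hg hT]

section Triangular

variable {α β : Type*} {n : ℕ}

/-- The lower-triangular map `z ↦ (gᵢ(z₁, …, zᵢ₋₁; zᵢ))ᵢ` with components `gᵢ`. The coordinates
preceding the `i`-th are passed to `gᵢ` as a separate argument, so that `gᵢ(v; ·)` is its fibre
over `v`. -/
def triangularMap (g : (i : Fin n) → (Fin i → α) → α → β) (z : Fin n → α) (i : Fin n) : β :=
  g i (fun j => z ⟨j, j.2.trans i.2⟩) (z i)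

theorem triangularMap_eq_snoc (g : (i : Fin (n + 1)) → (Fin i → α) → α → β) (z : Fin (n + 1) → α) :
    triangularMap g z =
      Fin.snoc (α := fun _ => β) (triangularMap (fun i : Fin n => g i.castSucc) (Fin.init z))
        (g (Fin.last n) (Fin.init z) (z (Fin.last n))) :=
  (Fin.snoc_init_self (triangularMap g z)).symm

theorem measurePreserving_triangularMap [MeasurableSpace α] [MeasurableSpace β]
    {μ : Fin n → Measure α} {ν : Fin n → Measure β} [∀ i, SigmaFinite (μ i)]
    [∀ i, SigmaFinite (ν i)] {g : (i : Fin n) → (Fin i → α) → α → β}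
    (hg : ∀ i, Measurable (Function.uncurry (g i))) (hmap : ∀ i v, (μ i).map (g i v) = ν i) :
    MeasurePreserving (triangularMap g) (Measure.pi μ) (Measure.pi ν) := by
  induction n with
  | zero => convert (measurePreserving_pi_empty ν).symm.comp (measurePreserving_pi_empty μ)
  | succ n ih =>
    have hinit : MeasurePreserving (triangularMap fun i : Fin n => g i.castSucc)
        (Measure.pi fun i : Fin n => μ i.castSucc) (Measure.pi fun i : Fin n => ν i.castSucc) :=
      ih (fun i => hg i.castSucc) fun i => hmap i.castSucc
    have hskew := hinit.skew_product (hg (Fin.last n)) (ae_of_all _ (hmap (Fin.last n)))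
    have hsplit := (measurePreserving_snocMeasurableEquiv μ).symm
    have hcomp := (measurePreserving_snocMeasurableEquiv ν).comp (hskew.comp hsplit)
    convert hcomp using 1
    exact funext (triangularMap_eq_snoc g)

end Triangular

theorem map_div_volume_pi {ι : Type*} [Fintype ι] {d : ι → ℝ} (hd : ∀ i, d i ≠ 0) :
    (volume : Measure (ι → ℝ)).map (fun x i => x i / d i) = ENNReal.ofReal |∏ i, d i| • volume := by
  classical
  have hdet : (Matrix.diagonal d⁻¹).det = (∏ i, d i)⁻¹ := by simp
  have hdet_ne_zero : (Matrix.diagonal d⁻¹).det ≠ 0 := by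
    rw [hdet]
    exact inv_ne_zero (Finset.prod_ne_zero_iff.2 fun i _ => hd i)
  have htoLin : ⇑(Matrix.toLin' (Matrix.diagonal d⁻¹)) = fun x i => x i / d i := by
    ext x i
    simp [Matrix.mulVec_diagonal, div_eq_inv_mul]
  have hmap := Real.map_matrix_volume_pi_eq_smul_volume_pi hdet_ne_zero
  rwa [htoLin, hdet, inv_inv] at hmap

section TransportMap

variable {L : ℕ} {f : (i : Fin L) → (Fin i → ℝ) → ℝ} {d : Fin L → ℝ}

theorem measurePreserving_triangularMap_sub (hf : ∀ i, Measurable (f i)) :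
    MeasurePreserving (triangularMap fun i v x => x - f i v) := by
  refine measurePreserving_triangularMap (fun i => ?_) fun i v =>
    (measurePreserving_sub_right volume (f i v)).map_eq
  exact measurable_snd.sub ((hf i).comp measurable_fst)

theorem Tmap_eq_div_comp_triangularMap_sub (f : (i : Fin L) → (Fin i → ℝ) → ℝ) (d : Fin L → ℝ) :
    Tmap L f d = (fun x i => x i / d i) ∘ triangularMap fun i v x => x - f i v :=
  rfl

theorem measurable_Tmap (hf : ∀ i, Measurable (f i)) : Measurable (Tmap L f d) := by
  rw [Tmap_eq_div_comp_triangularMap_sub]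
  exact Measurable.comp (by fun_prop) (measurePreserving_triangularMap_sub hf).measurable

theorem map_Tmap_volume (hf : ∀ i, Measurable (f i)) (hd : ∀ i, d i ≠ 0) :
    volume.map (Tmap L f d) = ENNReal.ofReal |∏ i, d i| • volume := by
  have hshear := measurePreserving_triangularMap_sub hf
  rw [Tmap_eq_div_comp_triangularMap_sub, ← Measure.map_map (by fun_prop) hshear.measurable,
    hshear.map_eq, map_div_volume_pi hd]

end TransportMap

theorem stdNormalPDF_eq_gaussianPDFReal :
    stdNormalPDF = ProbabilityTheory.gaussianPDFReal 0 1 := by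
  ext x
  simp [stdNormalPDF, ProbabilityTheory.gaussianPDFReal]

theorem measurable_stdNormalPDF : Measurable stdNormalPDF := by
  rw [stdNormalPDF_eq_gaussianPDFReal]
  exact ProbabilityTheory.measurable_gaussianPDFReal 0 1

theorem stdNormalPDF_nonneg (x : ℝ) : 0 ≤ stdNormalPDF x := by
  rw [stdNormalPDF_eq_gaussianPDFReal]
  exact ProbabilityTheory.gaussianPDFReal_nonneg 0 1 x

theorem gaussianReal_eq_withDensity_stdNormalPDF :
    ProbabilityTheory.gaussianReal 0 1 =
      volume.withDensity fun x => ENNReal.ofReal (stdNormalPDF x) := by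
  rw [stdNormalPDF_eq_gaussianPDFReal]
  exact ProbabilityTheory.gaussianReal_of_var_ne_zero 0 one_ne_zero

theorem transport_map_density_factorization_general (L : ℕ)
    (f : (i : Fin L) → (Fin i → ℝ) → ℝ) (hf : ∀ i, Measurable (f i))
    (d : Fin L → ℝ) (hd : ∀ i, d i ≠ 0)
    (ρ : Fin L → ℝ → ℝ) (hρ : ∀ i, Measurable (ρ i)) (hρ_nonneg : ∀ i x, 0 ≤ ρ i x) :
    Measure.map (Tmap L f d)
      ((volume : Measure (Fin L → ℝ)).withDensity fun y =>
        ENNReal.ofReal (∏ i, ρ i (Tmap L f d y i) / |d i|))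
      = Measure.pi fun i => volume.withDensity fun x => ENNReal.ofReal (ρ i x) := by
  have hcancel (x : Fin L → ℝ) :
      ENNReal.ofReal |∏ i, d i| * ENNReal.ofReal (∏ i, ρ i (x i) / |d i|) =
        ∏ i, ENNReal.ofReal (ρ i (x i)) := by
    rw [← ENNReal.ofReal_mul (abs_nonneg _), Finset.abs_prod, ← Finset.prod_mul_distrib,
      ← ENNReal.ofReal_prod_of_nonneg fun i _ => hρ_nonneg i (x i)]
    simp_rw [mul_div_cancel₀ _ (abs_ne_zero.2 (hd _))]
  have hdensity : Measurable fun x : Fin L → ℝ => ENNReal.ofReal (∏ i, ρ i (x i) / |d i|) := by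
    fun_prop
  calc
    _ = (volume.map (Tmap L f d)).withDensity fun x => ENNReal.ofReal (∏ i, ρ i (x i) / |d i|) :=
      map_withDensity_comp (measurable_Tmap hf) hdensity
    _ = volume.withDensity fun x => ∏ i, ENNReal.ofReal (ρ i (x i)) := by
      rw [map_Tmap_volume hf hd, withDensity_smul_measure, ← withDensity_smul _ hdensity]
      exact congrArg _ (funext hcancel)
    _ = Measure.pi fun i => volume.withDensity fun x => ENNReal.ofReal (ρ i x) :=
      (pi_withDensity fun i => (hρ i).ennreal_ofReal).symm

/-- Density factorization of the triangular transport model: if each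
`f_i` is Borel measurable and each `d_i > 0`, and `μ` is the measure on `ℝ^L` with
Lebesgue density `p(y) = ∏_{i=1}^L φ((y_i − f_i(y_1, …, y_{i−1}))/d_i)/d_i`, then the
pushforward of `μ` under the lower-triangular transport map `T` equals the
`L`-dimensional standard Gaussian measure (the product of `L` copies of `N(0,1)`). -/
theorem transport_map_density_factorization (L : ℕ) (hL : 1 ≤ L)
    (f : (i : Fin L) → (Fin i → ℝ) → ℝ) (hf : ∀ i, Measurable (f i))
    (hf1 : ∀ v : Fin ((⟨0, hL⟩ : Fin L) : ℕ) → ℝ, f ⟨0, hL⟩ v = 0)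
    (d : Fin L → ℝ) (hd : ∀ i, 0 < d i) :
    Measure.map (Tmap L f d)
      ((volume : Measure (Fin L → ℝ)).withDensity fun y =>
        ENNReal.ofReal (∏ i : Fin L,
          stdNormalPDF ((y i - f i (fun j => y ⟨j.1, lt_trans j.2 i.2⟩)) / d i) / d i))
      = Measure.pi (fun _ : Fin L => ProbabilityTheory.gaussianReal 0 1) := by
  simpa only [abs_of_pos (hd _), gaussianReal_eq_withDensity_stdNormalPDF] using!
    transport_map_density_factorization_general L f hf d (fun i => (hd i).ne')
      (fun _ => stdNormalPDF) (fun _ => measurable_stdNormalPDF) fun _ => stdNormalPDF_nonneg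

end
end

section
/- The pushforward of Lebesgue measure on ℝ under the map η ↦ (log(1 + exp(η)))² equals the Borel measure on ℝ with Lebesgue density p(s) = 1/(2·√s·(1 − exp(−√s))) for s > 0 and p(s) = 0 for s ≤ 0. -/
open MeasureTheory

noncomputable section

/-- The softplus function `softplus(η) = log(1 + exp(η))`. -/
def softplus (η : ℝ) : ℝ := Real.log (1 + Real.exp η)

/-- The square of the softplus function, `η ↦ (log(1 + exp(η)))²`. -/
def softplusSq (η : ℝ) : ℝ := softplus η ^ 2

/-- The induced improper prior density: `p(s) = 1/(2·√s·(1 − exp(−√s)))` for `s > 0`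
and `p(s) = 0` for `s ≤ 0`. -/
def inducedDensity (s : ℝ) : ℝ :=
  if 0 < s then 1 / (2 * Real.sqrt s * (1 - Real.exp (-Real.sqrt s))) else 0

/-!
The derivative of `softplusSq` at `x` is `2 * softplus x * sigmoid x`. Since
`sigmoid = 1 - exp (-softplus)`, it depends on `x` only through `s = softplusSq x`, as
`2 * √s * (1 - exp (-√s))`; its reciprocal is the density given by the change of variables formula
on the range `(0, ∞)` of `softplusSq`.
-/

section ChangeOfVariables

open scoped ENNReal

theorem restrict_withDensity_of_support_subset {α : Type*} [MeasurableSpace α] {μ : Measure α}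
    {s : Set α} {g : α → ℝ≥0∞} (hs : MeasurableSet s) (hg : Function.support g ⊆ s) :
    (μ.restrict s).withDensity g = μ.withDensity g := by
  rw [← withDensity_indicator hs, Set.indicator_eq_self.2 hg]

theorem map_withDensity_eq_of_hasFDerivWithinAt {E : Type*} [NormedAddCommGroup E]
    [NormedSpace ℝ E] [FiniteDimensional ℝ E] [MeasurableSpace E] [BorelSpace E] (μ : Measure E)
    [μ.IsAddHaarMeasure] {s : Set E} {f : E → E} {f' : E → E →L[ℝ] E} {g h : E → ℝ≥0∞}
    (hs : MeasurableSet s) (hf' : ∀ x ∈ s, HasFDerivWithinAt f (f' x) s x) (hf : Set.InjOn f s)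
    (hgh : ∀ x ∈ s, ENNReal.ofReal |(f' x).det| * g (f x) = h x) :
    ((μ.restrict s).withDensity h).map f = (μ.restrict (f '' s)).withDensity g := by
  have f_aemeasurable : AEMeasurable f (μ.restrict s) :=
    ContinuousOn.aemeasurable (fun x hx => (hf' x hx).continuousWithinAt) hs
  ext t ht
  have preimage_nullMeasurable := f_aemeasurable.nullMeasurableSet_preimage ht
  have preimage_measurable : MeasurableSet (s ∩ f ⁻¹' t) := by
    simpa only [Set.domRestrict_eq, Set.preimage_comp, Subtype.image_preimage_coe] using
      hs.subtype_image ((measurableEmbedding_of_fderivWithin hs hf' hf).measurable ht)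
  calc ((μ.restrict s).withDensity h).map f t
      = ∫⁻ x in s ∩ f ⁻¹' t, h x ∂μ := by
        rw [Measure.map_apply_of_aemeasurable
            (f_aemeasurable.mono_ac (withDensity_absolutelyContinuous _ _)) ht,
          withDensity_apply₀ _ preimage_nullMeasurable,
          Measure.restrict_restrict₀ preimage_nullMeasurable, Set.inter_comm]
    _ = ∫⁻ x in s ∩ f ⁻¹' t, ENNReal.ofReal |(f' x).det| * g (f x) ∂μ :=
        setLIntegral_congr_fun preimage_measurable fun x hx => (hgh x hx.1).symm
    _ = ∫⁻ y in f '' (s ∩ f ⁻¹' t), g y ∂μ :=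
        (lintegral_image_eq_lintegral_abs_det_fderiv_mul μ preimage_measurable
          (fun x hx => (hf' x hx.1).mono Set.inter_subset_left)
          (hf.mono Set.inter_subset_left) g).symm
    _ = (μ.restrict (f '' s)).withDensity g t := by
        rw [Set.image_inter_preimage, Set.inter_comm, withDensity_apply _ ht,
          Measure.restrict_restrict ht]

theorem map_volume_eq_withDensity_of_hasDerivAt {f f' : ℝ → ℝ} {g : ℝ → ℝ≥0∞}
    (hf' : ∀ x, HasDerivAt f (f' x) x) (hf : Function.Injective f)
    (hg : ∀ x, ENNReal.ofReal |f' x| * g (f x) = 1) (hg_supp : Function.support g ⊆ Set.range f) :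
    (volume : Measure ℝ).map f = volume.withDensity g := by
  have f_continuous : Continuous f :=
    continuous_iff_continuousAt.2 fun x => (hf' x).continuousAt
  have range_measurable : MeasurableSet (Set.range f) :=
    (f_continuous.measurableEmbedding hf).measurableSet_range
  have map_eq := map_withDensity_eq_of_hasFDerivWithinAt volume (h := 1) MeasurableSet.univ
    (fun x _ => (hf' x).hasFDerivAt.hasFDerivWithinAt) hf.injOn
    (fun x _ => by
      simpa only [ContinuousLinearMap.det_toSpanSingleton, Pi.one_apply] using hg x)
  rwa [Measure.restrict_univ, withDensity_one, Set.image_univ,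
    restrict_withDensity_of_support_subset range_measurable hg_supp] at map_eq

end ChangeOfVariables

section Softplus

open Real Set

theorem softplus_pos (x : ℝ) : 0 < softplus x :=
  log_pos (lt_add_of_pos_right 1 (exp_pos x))

theorem exp_softplus (x : ℝ) : exp (softplus x) = 1 + exp x :=
  exp_log (by positivity)

theorem softplus_strictMono : StrictMono softplus := fun x y hxy =>
  log_lt_log (by positivity) (by gcongr)

theorem range_softplus : range softplus = Ioi 0 := by
  refine Subset.antisymm (range_subset_iff.2 softplus_pos) fun t (ht : 0 < t) => ?_
  refine ⟨log (exp t - 1), ?_⟩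
  rw [softplus, exp_log (sub_pos.2 (one_lt_exp_iff.2 ht)), add_sub_cancel, log_exp]

theorem one_sub_exp_neg_softplus (x : ℝ) : 1 - exp (-softplus x) = sigmoid x := by
  calc 1 - exp (-softplus x)
      = 1 - sigmoid (-x) := by rw [exp_neg, exp_softplus, sigmoid_def, neg_neg]
    _ = sigmoid x := by rw [← sigmoid_neg, neg_neg]

theorem hasDerivAt_softplus (x : ℝ) : HasDerivAt softplus (sigmoid x) x := by
  have logistic_eq : exp x / (1 + exp x) = sigmoid x := by
    rw [sigmoid_def, exp_neg]
    field_simp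
    ring
  exact (((hasDerivAt_exp x).const_add 1).log (by positivity)).congr_deriv logistic_eq

theorem softplusSq_strictMono : StrictMono softplusSq := fun x _ hxy =>
  pow_lt_pow_left₀ (softplus_strictMono hxy) (softplus_pos x).le two_ne_zero

theorem range_softplusSq : range softplusSq = Ioi 0 := by
  refine Subset.antisymm (range_subset_iff.2 fun x => pow_pos (softplus_pos x) 2)
    fun s (hs : 0 < s) => ?_
  obtain ⟨x, hx⟩ : √s ∈ range softplus := range_softplus ▸ sqrt_pos.2 hs
  exact ⟨x, by rw [softplusSq, hx, sq_sqrt hs.le]⟩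

theorem hasDerivAt_softplusSq (x : ℝ) :
    HasDerivAt softplusSq (2 * softplus x * sigmoid x) x :=
  ((hasDerivAt_softplus x).pow 2).congr_deriv (by simp)

theorem inducedDensity_softplusSq (x : ℝ) :
    inducedDensity (softplusSq x) = (2 * softplus x * sigmoid x)⁻¹ := by
  rw [inducedDensity, softplusSq, if_pos (pow_pos (softplus_pos x) 2),
    sqrt_sq (softplus_pos x).le, one_sub_exp_neg_softplus, one_div]

theorem support_inducedDensity_subset : Function.support inducedDensity ⊆ Ioi 0 :=
  fun _ hs => of_not_not fun hs_nonpos => hs (if_neg hs_nonpos)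

end Softplus

/-- The pushforward of Lebesgue measure on `ℝ` under the map
`η ↦ (log(1 + exp(η)))²` equals the Borel measure on `ℝ` with Lebesgue density
`p(s) = 1/(2·√s·(1 − exp(−√s)))` for `s > 0` and `p(s) = 0` for `s ≤ 0`. -/
theorem softplus_sq_pushforward :
    Measure.map softplusSq (volume : Measure ℝ)
      = (volume : Measure ℝ).withDensity fun s => ENNReal.ofReal (inducedDensity s) := by
  refine map_volume_eq_withDensity_of_hasDerivAt hasDerivAt_softplusSq
    softplusSq_strictMono.injective (fun x => ?_) ?_
  · have deriv_pos : 0 < 2 * softplus x * Real.sigmoid x :=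
      mul_pos (mul_pos two_pos (softplus_pos x)) (Real.sigmoid_pos x)
    rw [inducedDensity_softplusSq, abs_of_pos deriv_pos, ← ENNReal.ofReal_mul deriv_pos.le,
      mul_inv_cancel₀ deriv_pos.ne', ENNReal.ofReal_one]
  · rw [range_softplusSq]
    exact (Function.support_comp_subset ENNReal.ofReal_zero inducedDensity).trans
      support_inducedDensity_subset

end
end
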